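/- arXiv:0905.3197 — 3 statements merged into one kernel-verified Lean document; each statement's English description precedes it below -/
import Mathlib

section
/- (Sjöstrand) Let G be a connected finite simple graph and let D be a distribution on G with D(v) ≥ 1 for every vertex v. Then π(G, D) equals the smallest number n with the property that whenever n pebbles are placed on a single vertex u (i.e., starting from the distribution n·δ_u, for any vertex u), the distribution D is reachable. In particular, an amount of pebbles reaches D from every starting distribution if and only if it reaches D from every starting distribution concentrated on one vertex. -/
open scoped BigOperators

/-- A single pebbling move on a simple graph: remove two pebbles from `u`
and add one pebble on an adjacent vertex `v`. -/
def PebMove {V : Type*} [DecidableEq V] (G : SimpleGraph V) (D D' : V → ℕ) : Prop :=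
  ∃ u v, G.Adj u v ∧ 2 ≤ D u ∧
    D' = fun w => if w = u then D u - 2 else if w = v then D v + 1 else D w

/-- `D'` is reachable from `D`: some sequence of pebbling moves starting at `D`
produces a distribution containing `D'`. -/
def Reaches {V : Type*} [DecidableEq V] (G : SimpleGraph V) (D D' : V → ℕ) : Prop :=
  ∃ D'', Relation.ReflTransGen (PebMove G) D D'' ∧ ∀ v, D' v ≤ D'' v

/-- Total number of pebbles of a distribution. -/
def pebTotal {V : Type*} [Fintype V] (D : V → ℕ) : ℕ := ∑ v, D v

/-- The pebbling number of a set `S` of target distributions on `G`: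
the least `N` (possibly `∞`) such that every member of `S` is reachable from
every distribution with at least `N` pebbles in total. -/
noncomputable def pebSet {V : Type*} [Fintype V] [DecidableEq V] (G : SimpleGraph V)
    (S : Set (V → ℕ)) : ℕ∞ :=
  sInf {N : ℕ∞ | ∀ D₀ : V → ℕ, N ≤ (pebTotal D₀ : ℕ∞) → ∀ D ∈ S, Reaches G D₀ D}

/-- The pebbling number of a single target distribution. -/
noncomputable def peb {V : Type*} [Fintype V] [DecidableEq V] (G : SimpleGraph V)
    (D : V → ℕ) : ℕ∞ :=
  pebSet G {D}

/-- The distribution with `t` pebbles on `v` and none elsewhere. -/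
def unitDist {V : Type*} [DecidableEq V] (t : ℕ) (v : V) : V → ℕ :=
  fun w => if w = v then t else 0


theorem aux_move_sum {V : Type*} [Fintype V] [DecidableEq V] (p : V → ℕ) (a b : V) (hab : a ≠ b)
    (ha : 2 ≤ p a) (g : V → ℕ) :
    ∑ w, (if w = a then p a - 2 else if w = b then p b + 1 else p w) * g w + 2 * g a
      = ∑ w, p w * g w + g b := by
  have h1 : ∑ w, (if w = a then 2 * g w else 0) = 2 * g a := by simp
  have h2 : ∑ w, (if w = b then g w else 0) = g b := by simp
  rw [← h1, ← h2, ← Finset.sum_add_distrib, ← Finset.sum_add_distrib]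
  refine Finset.sum_congr rfl fun w _ => ?_
  by_cases hwa : w = a
  · subst hwa
    simp only [if_true, if_neg hab]
    rw [← add_mul]
    congr 1
    omega
  · by_cases hwb : w = b
    · subst hwb
      simp only [if_true, if_neg hwa]
      ring
    · simp [hwa, hwb]

theorem aux_weight {V : Type*} [Fintype V] [DecidableEq V] (G : SimpleGraph V)
    (hG : G.Connected) (u : V) (p q : V → ℕ) (h : Relation.ReflTransGen (PebMove G) p q) :
    ∑ w, q w * 2 ^ (G.dist u w) ≤ ∑ w, p w * 2 ^ (G.dist u w) := by
  induction h with
  | refl => exact le_rfl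
  | tail _ hm ih =>
    obtain ⟨a, b, hab, h2, rfl⟩ := hm
    have := aux_move_sum _ a b hab.ne h2 (fun w => 2 ^ (G.dist u w))
    have hd : G.dist u b ≤ G.dist u a + 1 := by
      have h3 := hG.dist_triangle (u := u) (v := a) (w := b)
      rwa [SimpleGraph.dist_eq_one_iff_adj.mpr hab] at h3
    have h4 : 2 ^ (G.dist u b) ≤ 2 * 2 ^ (G.dist u a) := by
      rw [← pow_succ']
      exact Nat.pow_le_pow_right (by norm_num) hd
    beta_reduce
    omega

/-- Moving one pebble along a chain of increasing level. -/
theorem aux_chain {V : Type*} [Fintype V] [DecidableEq V] (G : SimpleGraph V) (δ : V → ℕ)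
    (p : V → ℕ) (h0 : ∀ x, δ x = 0 → 2 ≤ p x)
    (hn : ∀ x k, δ x = k + 1 → ∃ y, G.Adj y x ∧ δ y = k) (d : ℕ) :
    ∀ t, δ t = d + 1 → (∀ x, δ x < d + 1 → 1 ≤ p x) →
    ∃ q, Relation.ReflTransGen (PebMove G) p q ∧ q t = p t + 1 ∧ (∀ w, w ≠ t → q w ≤ p w) ∧
      (∀ w, w ≠ t → d + 1 ≤ δ w → q w = p w) ∧
      ∑ w, q w * 2 ^ δ w = ∑ w, p w * 2 ^ δ w ∧ ∑ w, q w < ∑ w, p w := by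
  induction d with
  | zero =>
    intro t ht _
    obtain ⟨y, hy, hk⟩ := hn t 0 ht
    have hyt := hy.ne
    refine ⟨_, .single ⟨y, t, hy, h0 y hk, rfl⟩, ?_, ?_, ?_, ?_, ?_⟩
    · simp [hyt.symm]
    · intro w hw
      by_cases h : w = y
      · simp [h]
      · simp [h, hw]
    · intro w hw hd
      have h : w ≠ y := by rintro rfl; omega
      simp [h, hw]
    · have := aux_move_sum p y t hyt (h0 y hk) (fun w => 2 ^ δ w)
      simp only [ht, hk] at this
      omega
    · have := aux_move_sum p y t hyt (h0 y hk) (fun _ => 1)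
      simp only [mul_one] at this
      omega
  | succ d ih =>
    intro t ht hp
    obtain ⟨y, hy, hk⟩ := hn t _ ht
    have hyt := hy.ne
    obtain ⟨q, hq, hqy, hqle, hqeq, hqs, hqt⟩ := ih y hk (fun x hx => hp x (by omega))
    have hpy := hp y (by omega)
    have hq2 : 2 ≤ q y := by omega
    refine ⟨_, hq.tail ⟨y, t, hy, hq2, rfl⟩, ?_, ?_, ?_, ?_, ?_⟩
    · simp [hyt.symm, hqeq t hyt.symm (by omega)]
    · intro w hw
      by_cases h : w = y
      · subst h
        simp only [if_true]
        omega
      · simp [h, hw, hqle w h]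
    · intro w hw hd
      have h : w ≠ y := by rintro rfl; omega
      simp [h, hw, hqeq w h (by omega)]
    · have := aux_move_sum q y t hyt hq2 (fun w => 2 ^ δ w)
      simp only [ht, hk, pow_succ] at this
      omega
    · have := aux_move_sum q y t hyt hq2 (fun _ => 1)
      simp only [mul_one] at this
      omega

theorem aux_main {V : Type*} [Fintype V] [DecidableEq V] (G : SimpleGraph V)
    (hG : G.Connected) (D : V → ℕ) (hD : ∀ v, 1 ≤ D v) (n : ℕ)
    (hn : ∀ u, ∑ w, D w * 2 ^ (G.dist u w) ≤ n) (m : ℕ) :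
    ∀ (p δ : V → ℕ), ∑ w, p w = m → (∃ u, ∀ v, δ v ≤ G.dist u v) →
      (∀ u, D u < p u → ∀ v, δ v ≤ G.dist u v) → n ≤ ∑ w, p w * 2 ^ δ w → Reaches G p D := by
  induction m using Nat.strong_induction_on with
  | _ m ih =>
  intro p δ hm ⟨u, hu⟩ hfat hΦ
  by_cases hthin : ∀ v, D v ≤ p v
  · exact ⟨p, .refl, hthin⟩
  push Not at hthin
  by_cases hF : ∀ v, p v ≤ D v
  · exfalso
    have h1 : ∑ w, p w * 2 ^ δ w ≤ ∑ w, p w * 2 ^ (G.dist u w) :=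
      Finset.sum_le_sum fun w _ =>
        Nat.mul_le_mul_left _ (Nat.pow_le_pow_right (by norm_num) (hu w))
    have h2 : ∑ w, p w * 2 ^ (G.dist u w) < ∑ w, D w * 2 ^ (G.dist u w) := by
      obtain ⟨t, ht⟩ := hthin
      exact Finset.sum_lt_sum (fun w _ => Nat.mul_le_mul_right _ (hF w))
        ⟨t, Finset.mem_univ _, Nat.mul_lt_mul_of_pos_right ht (by positivity)⟩
    have := hn u
    omega
  push Not at hF
  let F : Finset V := Finset.univ.filter fun v => D v < p v
  have hFm : ∀ v, v ∈ F ↔ D v < p v := fun v => by simp [F]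
  have hFn : F.Nonempty := by
    obtain ⟨f, hf⟩ := hF
    exact ⟨f, (hFm f).2 hf⟩
  obtain ⟨ε, hε1, hε2⟩ : ∃ ε : V → ℕ, (∀ f ∈ F, ∀ v, ε v ≤ G.dist f v) ∧
      ∀ v, ∃ f ∈ F, ε v = G.dist f v := by
    refine ⟨fun v => F.inf' hFn (fun f => G.dist f v), fun f hf v => Finset.inf'_le _ hf,
      fun v => Finset.exists_mem_eq_inf' hFn _⟩
  have hle : ∀ v, δ v ≤ ε v := by
    intro v
    obtain ⟨f, hf, h⟩ := hε2 v
    rw [h]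
    exact hfat f ((hFm f).1 hf) v
  have hΦ' : n ≤ ∑ w, p w * 2 ^ ε w := hΦ.trans <| Finset.sum_le_sum fun w _ =>
        Nat.mul_le_mul_left _ (Nat.pow_le_pow_right (by norm_num) (hle w))
  have h0 : ∀ x, ε x = 0 → D x < p x := by
    intro x hx
    obtain ⟨f, hf, h⟩ := hε2 x
    rw [hx] at h
    have : f = x := hG.dist_eq_zero_iff.1 h.symm
    subst this
    exact (hFm _).1 hf
  have hnb : ∀ x k, ε x = k + 1 → ∃ y, G.Adj y x ∧ ε y = k := by
    intro x k hx
    obtain ⟨f, hf, h⟩ := hε2 x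
    rw [hx] at h
    obtain ⟨W, hW⟩ := hG.exists_walk_length_eq_dist x f
    rw [SimpleGraph.dist_comm, ← h] at hW
    cases W with
    | nil => simp at hW
    | @cons _ y _ hadj W' =>
      refine ⟨y, hadj.symm, ?_⟩
      simp only [SimpleGraph.Walk.length_cons] at hW
      have h1 : G.dist y f ≤ k := (SimpleGraph.dist_le W').trans (by omega)
      rw [SimpleGraph.dist_comm] at h1
      have h2 := hε1 f hf y
      obtain ⟨f', hf', h'⟩ := hε2 y
      have h3 := hε1 f' hf' x
      have h4 := hG.dist_triangle (u := f') (v := y) (w := x)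
      rw [SimpleGraph.dist_eq_one_iff_adj.mpr hadj.symm] at h4
      omega
  -- a thin vertex of minimal level
  obtain ⟨t, htT, htmin⟩ := Finset.exists_min_image
    (Finset.univ.filter fun v => p v < D v) ε (by
      obtain ⟨t, ht⟩ := hthin
      exact ⟨t, by simpa using ht⟩)
  have ht : p t < D t := by simpa using htT
  have hmin : ∀ x, ε x < ε t → 1 ≤ p x := by
    intro x hx
    by_contra hc
    have := htmin x (by simp; have := hD x; omega)
    omega
  obtain ⟨d, hd⟩ : ∃ d, ε t = d + 1 := by
    refine Nat.exists_eq_succ_of_ne_zero fun h => ?_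
    have := h0 t h
    omega
  rw [hd] at hmin
  obtain ⟨q, hq, hqt, hqle, -, hqs, hqlt⟩ := aux_chain G ε p
    (fun x hx => by have := h0 x hx; have := hD x; omega) hnb d t hd hmin
  have hfq : ∀ v, D v < q v → v ∈ F := by
    intro v hv
    rw [hFm]
    by_cases h : v = t
    · subst h
      omega
    · have := hqle v h
      omega
  obtain ⟨f, hf⟩ := hFn
  obtain ⟨r, hr, hr'⟩ := ih _ (hm ▸ hqlt) q ε rfl ⟨f, hε1 f hf⟩
    (fun v hv => hε1 v (hfq v hv)) (hqs ▸ hΦ')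
  exact ⟨r, hq.trans hr, hr'⟩

/-- Sjöstrand's theorem: for a target distribution with at least one pebble on
every vertex of a connected graph, the pebbling number equals the least `n`
such that `D` is reachable from `n` pebbles placed on any single vertex. -/
theorem sjostrand_cover_pebbling {V : Type*} [Fintype V] [DecidableEq V]
    (G : SimpleGraph V) (hG : G.Connected) (D : V → ℕ) (hD : ∀ v, 1 ≤ D v) :
    peb G D =
      sInf {N : ℕ∞ | ∀ (u : V) (n : ℕ), N ≤ (n : ℕ∞) → Reaches G (unitDist n u) D} := by
  unfold peb pebSet
  congr 1
  ext N
  simp only [Set.mem_ofPred_eq, Set.mem_singleton_iff, forall_eq]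
  constructor
  · intro h u n hN
    refine h _ ?_
    have : pebTotal (unitDist n u) = n := by simp [pebTotal, unitDist]
    rwa [this]
  · intro h p hN
    refine aux_main G hG D hD (pebTotal p) (fun u => ?_) _ p (fun _ => 0) rfl ?_ ?_ ?_
    · obtain ⟨q, hq, hle⟩ := h u _ hN
      have h1 := aux_weight G hG u _ _ hq
      have h2 : ∑ w, unitDist (pebTotal p) u w * 2 ^ (G.dist u w) = pebTotal p := by
        simp [unitDist]
      rw [h2] at h1
      exact (Finset.sum_le_sum fun w _ => Nat.mul_le_mul_right _ (hle w)).trans h1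
    · exact ⟨hG.nonempty.some, fun _ => Nat.zero_le _⟩
    · exact fun _ _ _ => Nat.zero_le _
    · simp [pebTotal]
end

section
/- (Sjöstrand) Let G and H be connected finite simple graphs, let D_g be a distribution on G with D_g(v) ≥ 1 for every vertex v of G, and let D_h be a distribution on H with D_h(w) ≥ 1 for every vertex w of H. Then π(G × H, D_g · D_h) ≤ π(G, D_g) · π(H, D_h). -/
open scoped BigOperators

/-- Effect of one move on a weighted sum. -/
lemma move_sum {V : Type*} [Fintype V] [DecidableEq V] (D : V → ℕ) (c : V → ℕ) {u v : V}
    (huv : u ≠ v) (h2 : 2 ≤ D u) :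
    (∑ w, (if w = u then D u - 2 else if w = v then D v + 1 else D w) * c w) + 2 * c u
      = (∑ w, D w * c w) + c v := by
  have e1 : 2 * c u = ∑ w, (if w = u then 2 * c w else 0) := by simp
  have e2 : c v = ∑ w, (if w = v then c w else 0) := by simp
  rw [e1, e2, ← Finset.sum_add_distrib, ← Finset.sum_add_distrib]
  refine Finset.sum_congr rfl fun w _ => ?_
  by_cases h : w = u
  · subst h
    obtain ⟨k, hk⟩ := Nat.exists_eq_add_of_le h2
    simp [huv, hk]
    ring
  · by_cases h' : w = v
    · subst h'
      simp [h]
      ring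
    · simp [h, h']

/-- Lower bound: weight with respect to distance from `v` never increases. -/
lemma weight_mono {V : Type*} [Fintype V] [DecidableEq V] (G : SimpleGraph V)
    (hG : G.Connected) (v : V) {D D' : V → ℕ} (h : Relation.ReflTransGen (PebMove G) D D') :
    ∑ u, D' u * 2 ^ G.dist v u ≤ ∑ u, D u * 2 ^ G.dist v u := by
  induction h with
  | refl => exact le_rfl
  | @tail B C _ hm ih =>
    refine le_trans ?_ ih
    obtain ⟨u, x, hux, h2, rfl⟩ := hm
    have hs := move_sum B (fun w => 2 ^ G.dist v w) hux.ne h2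
    have hd : G.dist v x ≤ G.dist v u + 1 := by
      have h1 := hG.dist_triangle (u := v) (v := u) (w := x)
      rw [SimpleGraph.dist_eq_one_iff_adj.2 hux] at h1
      exact h1
    have hp : 2 ^ G.dist v x ≤ 2 ^ (G.dist v u + 1) := Nat.pow_le_pow_right (by norm_num) hd
    rw [pow_succ] at hp
    simp only at hs ⊢
    omega

lemma peb_lower {V : Type*} [Fintype V] [DecidableEq V] (G : SimpleGraph V)
    (hG : G.Connected) (D : V → ℕ) (v : V) :
    ((∑ u, D u * 2 ^ G.dist v u : ℕ) : ℕ∞) ≤ peb G D := by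
  unfold peb pebSet
  refine le_sInf fun N hN => ?_
  induction N using ENat.recTopCoe with
  | top => exact le_top
  | coe n =>
    have ht : pebTotal (unitDist n v) = n := by simp [pebTotal, unitDist]
    obtain ⟨D'', hr, hD⟩ := hN (unitDist n v) (by rw [ht]) D rfl
    have h1 := weight_mono G hG v hr
    have h2 : ∑ u, unitDist n v u * 2 ^ G.dist v u = n := by simp [unitDist]
    have h3 : ∑ u, D u * 2 ^ G.dist v u ≤ ∑ u, D'' u * 2 ^ G.dist v u :=
      Finset.sum_le_sum fun u _ => Nat.mul_le_mul_right _ (hD u)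
    exact_mod_cast (by omega : ∑ u, D u * 2 ^ G.dist v u ≤ n)

/-- Pushing one pebble along a geodesic, borrowing one pebble at each inner vertex. -/
lemma push {V : Type*} [Fintype V] [DecidableEq V] (G : SimpleGraph V)
    (hG : G.Connected) (t : V) (c : V → ℕ) (d : ℕ) : ∀ (k : ℕ) (x : V) (p : V → ℕ),
    k + 1 ≤ d → G.dist x t = k + 1 → 2 ≤ p x →
    (∀ y, y ≠ t → y ≠ x → G.dist x y + G.dist y t = k + 1 → 1 ≤ p y) →
    (∀ y, y ≠ t → y ≠ x → G.dist x y + G.dist y t = k + 1 → c y ≤ 2 ^ (d - G.dist y t)) →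
    ∃ p', Relation.ReflTransGen (PebMove G) p p' ∧ (∀ y, y ≠ t → p' y ≤ p y) ∧
      p' t = p t + 1 ∧ p' x + 2 ≤ p x ∧ pebTotal p' < pebTotal p ∧
      (∑ u, p u * c u) + c t + 2 * 2 ^ (d - (k + 1)) ≤ (∑ u, p' u * c u) + 2 * c x + 2 ^ d := by
  intro k
  induction k with
  | zero =>
    intro x p hd hxt hx _ _
    have hadj : G.Adj x t := SimpleGraph.dist_eq_one_iff_adj.1 hxt
    have hs := move_sum p c hadj.ne hx
    have hs1 := move_sum p (fun _ => 1) hadj.ne hx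
    refine ⟨_, Relation.ReflTransGen.single ⟨x, t, hadj, hx, rfl⟩, ?_, ?_, ?_, ?_, ?_⟩
    · intro y hy
      by_cases h : y = x
      · subst h; simp
      · simp [h, hy]
    · simp [hadj.ne']
    · simp; omega
    · simp only [mul_one] at hs1
      unfold pebTotal
      beta_reduce
      omega
    · have : 2 * 2 ^ (d - (0 + 1)) = 2 ^ d := by
        rw [← pow_succ']; congr 1; omega
      omega
  | succ k ih =>
    intro x p hd hxt hx hp hc
    obtain ⟨W, hW⟩ := hG.exists_walk_length_eq_dist x t
    rw [hxt] at hW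
    cases W with
    | nil => simp at hW
    | @cons _ z _ hadj q =>
      have hq : q.length = k + 1 := by simpa using hW
      have hzt : G.dist z t = k + 1 := by
        have h1 := SimpleGraph.dist_le q
        have h2 := hG.dist_triangle (u := x) (v := z) (w := t)
        rw [SimpleGraph.dist_eq_one_iff_adj.2 hadj] at h2
        omega
      have hxz : G.dist x z = 1 := SimpleGraph.dist_eq_one_iff_adj.2 hadj
      have hzt' : z ≠ t := by
        rintro rfl
        simp at hzt
      have hxt' : x ≠ t := by
        rintro rfl
        simp at hxt
      have hgeo : ∀ y, G.dist z y + G.dist y t = k + 1 → G.dist x y + G.dist y t = k + 1 + 1 ∧ y ≠ x := by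
        intro y hy
        have h1 := hG.dist_triangle (u := x) (v := z) (w := y)
        have h2 := hG.dist_triangle (u := x) (v := y) (w := t)
        refine ⟨by omega, ?_⟩
        rintro rfl
        omega
      have hpz := hp z hzt' hadj.ne' (by omega)
      have hcz := hc z hzt' hadj.ne' (by omega)
      set p1 : V → ℕ := fun w => if w = x then p x - 2 else if w = z then p z + 1 else p w with hp1
      have hmove : PebMove G p p1 := ⟨x, z, hadj, hx, rfl⟩
      have p1x : p1 x = p x - 2 := by simp [hp1]
      have p1z : p1 z = p z + 1 := by simp [hp1, hadj.ne']
      have p1o : ∀ y, y ≠ x → y ≠ z → p1 y = p y := by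
        intro y h h'; simp [hp1, h, h']
      have hs : (∑ u, p1 u * c u) + 2 * c x = (∑ u, p u * c u) + c z := move_sum p c hadj.ne hx
      have hs1 : (∑ u, p1 u * 1) + 2 * 1 = (∑ u, p u * 1) + 1 :=
        move_sum p (fun _ => 1) hadj.ne hx
      obtain ⟨p', hr, hle, ht, hz, htot, hsum⟩ := ih z p1 (by omega) hzt (by omega)
        (fun y hyt hyz hy => by
          rw [p1o y (hgeo y hy).2 hyz]
          exact hp y hyt (hgeo y hy).2 (hgeo y hy).1)
        (fun y hyt hyz hy => hc y hyt (hgeo y hy).2 (hgeo y hy).1)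
      refine ⟨p', Relation.ReflTransGen.head hmove hr, ?_, ?_, ?_, ?_, ?_⟩
      · intro y hy
        by_cases h : y = x
        · subst h
          have := hle y hy
          omega
        · by_cases h' : y = z
          · subst h'; omega
          · rw [← p1o y h h']; exact hle y hy
      · rw [ht, p1o t hxt'.symm hzt'.symm]
      · have := hle x hxt'
        omega
      · simp only [mul_one] at hs1
        unfold pebTotal at *
        omega
      · have e : 2 * 2 ^ (d - (k + 1 + 1)) = 2 ^ (d - (k + 1)) := by
          rw [← pow_succ']; congr 1; omega
        rw [hzt] at hcz
        omega

/-- Core of the cover pebbling theorem. -/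
lemma cover_aux {V : Type*} [Fintype V] [DecidableEq V] (G : SimpleGraph V)
    (hG : G.Connected) (w : V → ℕ) (hw : ∀ v, 1 ≤ w v) : ∀ (n : ℕ) (p : V → ℕ),
    pebTotal p = n → ∀ (F : Finset V) (hF : F.Nonempty), (∀ v, v ∈ F ↔ w v < p v) →
    (∀ v, ∑ u, w u * 2 ^ G.dist v u ≤ ∑ u, p u * F.inf' hF (fun a => 2 ^ G.dist a u)) →
    Reaches G p w := by
  intro n
  induction n using Nat.strong_induction_on with
  | _ n ih =>
  intro p hpn F hF hmem hbound
  by_cases hthin : ∀ v, w v ≤ p v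
  · exact ⟨p, Relation.ReflTransGen.refl, hthin⟩
  push Not at hthin
  obtain ⟨t0, ht0⟩ := hthin
  obtain ⟨⟨f, t⟩, hft, hmin⟩ := Finset.exists_min_image
    (F ×ˢ Finset.univ.filter (fun v => p v < w v)) (fun q => G.dist q.1 q.2)
    (hF.product ⟨t0, by simp [ht0]⟩)
  simp only [Finset.mem_product, Finset.mem_filter, Finset.mem_univ, true_and] at hft hmin
  obtain ⟨hfF, htt⟩ := hft
  have hff := (hmem f).1 hfF
  have hne : f ≠ t := by rintro rfl; omega
  have hpos := hG.pos_dist_of_ne hne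
  obtain ⟨k, hk⟩ : ∃ k, G.dist f t = k + 1 := ⟨G.dist f t - 1, by omega⟩
  set c : V → ℕ := fun u => F.inf' hF (fun a => 2 ^ G.dist a u) with hcdef
  have hcf : ∀ u, c u ≤ 2 ^ G.dist f u := fun u => Finset.inf'_le _ hfF
  have hct : 2 ^ (k + 1) ≤ c t := by
    refine Finset.le_inf' _ _ fun a ha => ?_
    rw [← hk]
    exact Nat.pow_le_pow_right (by norm_num) (hmin (a, t) ⟨ha, htt⟩)
  have hwf := hw f
  obtain ⟨p', hr, hle, hpt, hpf, htot, hsum⟩ := push G hG t c (k + 1) k f p le_rfl hk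
    (by omega)
    (fun y hyt hyf hy => by
      by_contra hcon
      have hwy := hw y
      have h1 := hmin (f, y) ⟨hfF, by simp only; omega⟩
      have h2 := hG.pos_dist_of_ne hyt
      simp only at h1
      omega)
    (fun y hyt hyf hy => by
      refine (hcf y).trans (Nat.pow_le_pow_right (by norm_num) (by omega)))
  have hcf0 : c f ≤ 1 := by simpa using hcf f
  have hsum' : ∑ u, p u * c u ≤ ∑ u, p' u * c u := by
    simp only [Nat.sub_self, pow_zero] at hsum
    omega
  have hfat : ∀ v, w v < p' v → w v < p v := by
    intro v hv
    by_cases h : v = t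
    · subst h; omega
    · have := hle v h; omega
  suffices hS : Reaches G p' w by
    obtain ⟨D'', h1, h2⟩ := hS
    exact ⟨D'', hr.trans h1, h2⟩
  by_cases hF' : (Finset.univ.filter (fun v => w v < p' v)).Nonempty
  · refine ih (pebTotal p') (by omega) p' rfl _ hF' (by simp) fun v => ?_
    refine (hbound v).trans (hsum'.trans (Finset.sum_le_sum fun u _ => ?_))
    refine Nat.mul_le_mul_left _ (Finset.inf'_mono _ ?_ hF')
    intro a ha
    simp only [Finset.mem_filter, Finset.mem_univ, true_and] at ha
    exact (hmem a).2 (hfat a ha)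
  · have hle' : ∀ v, p' v ≤ w v := by
      intro v
      by_contra hcon
      exact hF' ⟨v, by simpa using hcon⟩
    refine ⟨p', Relation.ReflTransGen.refl, ?_⟩
    by_contra hcon
    push Not at hcon
    obtain ⟨x, hx⟩ := hcon
    have h1 : ∑ u, p' u * c u ≤ ∑ u, p' u * 2 ^ G.dist f u :=
      Finset.sum_le_sum fun u _ => Nat.mul_le_mul_left _ (hcf u)
    have h2 : ∑ u, p' u * 2 ^ G.dist f u < ∑ u, w u * 2 ^ G.dist f u :=
      Finset.sum_lt_sum (fun u _ => Nat.mul_le_mul_right _ (hle' u))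
        ⟨x, Finset.mem_univ _, Nat.mul_lt_mul_of_pos_right hx (by positivity)⟩
    have h3 := hbound f
    change _ ≤ ∑ u, p u * c u at h3
    omega

/-- The cover pebbling theorem (upper bound). -/
lemma cover {V : Type*} [Fintype V] [DecidableEq V] (G : SimpleGraph V)
    (hG : G.Connected) (w : V → ℕ) (hw : ∀ v, 1 ≤ w v) (p : V → ℕ)
    (hp : ∀ v, ∑ u, w u * 2 ^ G.dist v u ≤ pebTotal p) : Reaches G p w := by
  have hone : ∀ a u, 1 ≤ 2 ^ G.dist a u := fun a u => Nat.one_le_two_pow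
  by_cases hF : (Finset.univ.filter (fun v => w v < p v)).Nonempty
  · refine cover_aux G hG w hw _ p rfl _ hF (by simp) fun v => (hp v).trans ?_
    refine Finset.sum_le_sum fun u _ => Nat.le_mul_of_pos_right _ ?_
    exact Finset.le_inf' _ _ fun a _ => hone a u
  · have hle' : ∀ v, p v ≤ w v := by
      intro v
      by_contra hcon
      exact hF ⟨v, by simpa using hcon⟩
    refine ⟨p, Relation.ReflTransGen.refl, ?_⟩
    by_contra hcon
    push Not at hcon
    obtain ⟨x, hx⟩ := hcon
    have h1 : ∑ u, p u < ∑ u, w u :=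
      Finset.sum_lt_sum (fun u _ => hle' u) ⟨x, Finset.mem_univ _, hx⟩
    have h2 : ∑ u, w u ≤ ∑ u, w u * 2 ^ G.dist x u :=
      Finset.sum_le_sum fun u _ => Nat.le_mul_of_pos_right _ (hone x u)
    have h3 := hp x
    unfold pebTotal at h3
    omega

lemma dist_box {V W : Type*} (G : SimpleGraph V) (H : SimpleGraph W)
    (hG : G.Connected) (hH : H.Connected) (x y : V × W) :
    (SimpleGraph.boxProd G H).dist x y = G.dist x.1 y.1 + H.dist x.2 y.2 := by
  have h := SimpleGraph.edist_boxProd (G := G) (H := H) x y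
  rw [← ((hG.boxProd hH).preconnected x y).coe_dist_eq_edist,
    ← (hG.preconnected x.1 y.1).coe_dist_eq_edist,
    ← (hH.preconnected x.2 y.2).coe_dist_eq_edist] at h
  exact_mod_cast h

open SimpleGraph in
/-- Sjöstrand's product theorem: Graham-type inequality for everywhere-positive
target distributions. -/
theorem sjostrand_product {V W : Type*} [Fintype V] [DecidableEq V]
    [Fintype W] [DecidableEq W]
    (G : SimpleGraph V) (H : SimpleGraph W) (hG : G.Connected) (hH : H.Connected)
    (Dg : V → ℕ) (Dh : W → ℕ) (hDg : ∀ v, 1 ≤ Dg v) (hDh : ∀ w, 1 ≤ Dh w) :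
    peb (G □ H) (fun p => Dg p.1 * Dh p.2) ≤ peb G Dg * peb H Dh := by
  conv_lhs => unfold peb pebSet
  refine sInf_le ?_
  intro D₀ hD₀ D hD
  rw [Set.mem_singleton_iff] at hD
  subst hD
  refine cover (G □ H) (hG.boxProd hH) _ (fun v => Nat.mul_pos (hDg _) (hDh _)) D₀ fun v => ?_
  have h1 := mul_le_mul' (peb_lower G hG Dg v.1) (peb_lower H hH Dh v.2)
  have h2 := h1.trans hD₀
  have h3 : (∑ u, Dg u * 2 ^ G.dist v.1 u) * (∑ u, Dh u * 2 ^ H.dist v.2 u) ≤ pebTotal D₀ := by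
    exact_mod_cast h2
  refine le_of_eq_of_le ?_ h3
  rw [Finset.sum_mul_sum, Fintype.sum_prod_type]
  refine Finset.sum_congr rfl fun a _ => Finset.sum_congr rfl fun b _ => ?_
  rw [dist_box G H hG hH, pow_add]
  ring
end

section
/- For every n ≥ 2 and every integer i ≥ 0 with n + 2i − 1 ≥ 3, one has ρ(P_n, {2^i·δ_{x_1}, 2^i·δ_{x_n}}) = π(C_{n+2i−1}); that is, the target-selectable pebbling number of the set of two target distributions consisting of 2^i pebbles on one endpoint of the path P_n equals the pebbling number of the cycle on n + 2i − 1 vertices. -/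
open scoped BigOperators

/-- The target-selectable pebbling number of a set `S` of target distributions:
the least `N` (possibly `∞`) such that from every distribution with at least
`N` pebbles in total, at least one member of `S` is reachable. -/
noncomputable def tsPeb {V : Type*} [Fintype V] [DecidableEq V] (G : SimpleGraph V)
    (S : Set (V → ℕ)) : ℕ∞ :=
  sInf {N : ℕ∞ | ∀ D₀ : V → ℕ, N ≤ (pebTotal D₀ : ℕ∞) → ∃ D ∈ S, Reaches G D₀ D}


namespace PebAux

/-- Number of pebbles accumulated at position `t` when greedily moving forward. -/
def carry (b : ℕ → ℕ) : ℕ → ℕ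
  | 0 => b 0
  | t + 1 => b (t + 1) + carry b t / 2

lemma carry_weight (b : ℕ → ℕ) (t : ℕ) :
    ∑ s ∈ Finset.range (t + 1), b s * 2 ^ s < 2 ^ t * (carry b t + 1) := by
  induction t with
  | zero => simp [carry]
  | succ t ih =>
    rw [Finset.sum_range_succ]
    have h1 : carry b t + 1 ≤ 2 * (carry b t / 2 + 1) := by omega
    have h2 : 2 ^ t * (carry b t + 1) ≤ 2 ^ t * (2 * (carry b t / 2 + 1)) :=
      Nat.mul_le_mul_left _ h1
    simp only [carry]
    calc _ < 2 ^ t * (2 * (carry b t / 2 + 1)) + b (t + 1) * 2 ^ (t + 1) := by omega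
      _ = _ := by ring

lemma carry_shift (b : ℕ → ℕ) (i : ℕ) (h : ∀ s < i, b s = 0) (t : ℕ) :
    carry b (i + t) = carry (fun s => b (i + s)) t := by
  have hz : ∀ s < i, carry b s = 0 := by
    intro s hs
    induction s with
    | zero => simpa [carry] using h 0 hs
    | succ s ih => simp [carry, h _ hs, ih (by omega)]
  induction t with
  | zero =>
    cases i with
    | zero => rfl
    | succ i => simp [carry, hz i (by omega)]
  | succ t ih => rw [← add_assoc]; simp only [carry, ih]; rfl

lemma carry_tail (b : ℕ → ℕ) (t s : ℕ) (h : ∀ r, t < r → r ≤ t + s → b r = 0) :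
    carry b (t + s) = carry b t / 2 ^ s := by
  induction s with
  | zero => simp
  | succ s ih =>
    rw [← add_assoc]
    simp only [carry]
    rw [h _ (by omega) (by omega), ih (fun r h1 h2 => h r h1 (by omega)), Nat.div_div_eq_div_mul,
      pow_succ, zero_add]

/-- maximal size of a bad distribution -/
def g (m : ℕ) : ℕ := if m % 2 = 0 then 2 ^ (m / 2) - 1 else 2 * (2 ^ (m / 2 + 1) / 3)

def bad (m j : ℕ) : ℕ :=
  if m % 2 = 0 then (if j = m / 2 then 2 ^ (m / 2) - 1 else 0)
  else (if j = m / 2 then 2 ^ (m / 2 + 1) / 3 else 0)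
    + (if j = m / 2 + 1 then 2 ^ (m / 2 + 1) / 3 else 0)

lemma not_three (k : ℕ) : 2 ^ k % 3 = 1 ∧ k % 2 = 0 ∨ 2 ^ k % 3 = 2 ∧ k % 2 = 1 := by
  induction k with
  | zero => simp
  | succ k ih => rw [pow_succ]; omega

lemma bad_zero (m j : ℕ) (h1 : j ≠ m / 2) (h2 : j ≠ (m + 1) / 2) : bad m j = 0 := by
  unfold bad
  split_ifs <;> omega

lemma bad_sum (m : ℕ) (hm : 1 ≤ m) : ∑ j ∈ Finset.range (m + 1), bad m j = g m := by
  unfold bad g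
  split_ifs with h
  · rw [Finset.sum_ite_eq' (Finset.range (m+1)) (m/2)]
    rw [if_pos (by simp; omega)]
  · rw [Finset.sum_add_distrib, Finset.sum_ite_eq', Finset.sum_ite_eq',
      if_pos (by simp; omega), if_pos (by simp; omega)]
    ring

lemma bad_wR (m : ℕ) (hm : 1 ≤ m) :
    ∑ j ∈ Finset.range (m + 1), bad m j * 2 ^ j < 2 ^ m := by
  unfold bad
  split_ifs with h
  · simp only [ite_mul, zero_mul]
    rw [Finset.sum_ite_eq', if_pos (by simp; omega)]
    obtain ⟨k, rfl⟩ : ∃ k, m = k + k := ⟨m / 2, by omega⟩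
    rw [show (k + k) / 2 = k by omega, pow_add]
    exact Nat.mul_lt_mul_of_pos_right (by have := Nat.two_pow_pos k; omega) (by positivity)
  · simp only [add_mul, ite_mul, zero_mul]
    rw [Finset.sum_add_distrib, Finset.sum_ite_eq', Finset.sum_ite_eq',
      if_pos (by simp; omega), if_pos (by simp; omega)]
    obtain ⟨k, rfl⟩ : ∃ k, m = (k + 1) + k := ⟨m / 2, by omega⟩
    rw [show (k + 1 + k) / 2 = k by omega, pow_add 2 (k + 1) k]
    have := not_three (k + 1)
    have h3 : 3 * (2 ^ (k + 1) / 3) < 2 ^ (k + 1) := by omega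
    calc _ = 3 * (2 ^ (k + 1) / 3) * 2 ^ k := by rw [pow_succ 2 k]; ring
      _ < _ := Nat.mul_lt_mul_of_pos_right h3 (by positivity)

lemma bad_symm (m j : ℕ) (hj : j ≤ m) : bad m (m - j) = bad m j := by
  unfold bad
  split_ifs <;> omega

lemma sum_reflect (m : ℕ) (f : ℕ → ℕ) :
    ∑ j ∈ Finset.range (m + 1), f (m - j) = ∑ j ∈ Finset.range (m + 1), f j := by
  have := Finset.sum_range_reflect f (m + 1)
  simpa using this

lemma bad_wL (m : ℕ) (hm : 1 ≤ m) :
    ∑ j ∈ Finset.range (m + 1), bad m j * 2 ^ (m - j) < 2 ^ m := by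
  have := bad_wR m hm
  rw [← sum_reflect] at this
  convert this using 1
  refine Finset.sum_congr rfl fun j hj => ?_
  rw [bad_symm m j (by simp at hj; omega)]

lemma coef_even (k s : ℕ) (hs : s ≤ k + k) : 2 * 2 ^ k ≤ 2 ^ s + 2 ^ (k + k - s) := by
  have h : 2 ^ s * 2 ^ (k + k - s) = 2 ^ k * 2 ^ k := by
    rw [← pow_add, ← pow_add]; congr 1; omega
  generalize 2 ^ s = x at *
  generalize 2 ^ (k + k - s) = y at *
  generalize 2 ^ k = z at *
  zify at *
  nlinarith [sq_nonneg ((x : ℤ) - y), Int.natCast_nonneg x, Int.natCast_nonneg y,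
    Int.natCast_nonneg z]

lemma coef_odd_aux (k s : ℕ) (hs : s ≤ k) :
    3 * 2 ^ k ≤ 2 ^ s + 2 ^ (k + 1 + k - s) ∧
    (s < k → 9 * 2 ^ k ≤ 2 * (2 ^ s + 2 ^ (k + 1 + k - s))) := by
  obtain ⟨d, rfl⟩ := Nat.exists_eq_add_of_le hs
  rw [show s + d + 1 + (s + d) - s = s + d + d + 1 by omega]
  simp only [pow_add, pow_one]
  have h1 : 1 ≤ 2 ^ d := Nat.one_le_two_pow
  have h2 : s < s + d → 2 ≤ 2 ^ d := fun h => by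
    calc 2 = 2 ^ 1 := rfl
      _ ≤ 2 ^ d := Nat.pow_le_pow_right (by norm_num) (by omega)
  generalize 2 ^ d = z at *
  generalize 2 ^ s = x at *
  constructor
  · obtain ⟨w, rfl⟩ := Nat.exists_eq_add_of_le h1
    nlinarith [Nat.zero_le (x * w), Nat.zero_le (x * w * w)]
  · intro h
    obtain ⟨w, rfl⟩ := Nat.exists_eq_add_of_le (h2 h)
    nlinarith [Nat.zero_le (x * w), Nat.zero_le (x * w * w)]

lemma coef_odd (k s : ℕ) (hs : s ≤ k + 1 + k) :
    3 * 2 ^ k ≤ 2 ^ s + 2 ^ (k + 1 + k - s) ∧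
    (s ≠ k → s ≠ k + 1 → 9 * 2 ^ k ≤ 2 * (2 ^ s + 2 ^ (k + 1 + k - s))) := by
  rcases Nat.lt_or_ge k s with h | h
  · have := coef_odd_aux k (k + 1 + k - s) (by omega)
    rw [show k + 1 + k - (k + 1 + k - s) = s by omega] at this
    refine ⟨by omega, fun h1 h2 => ?_⟩
    have := this.2 (by omega)
    omega
  · have := coef_odd_aux k s h
    exact ⟨this.1, fun h1 _ => this.2 (by omega)⟩

lemma mid_carry (k : ℕ) (a : ℕ → ℕ) (h0 : ∀ s < k, a s = 0)
    (h : 2 ^ k ≤ a (k + 1) + a k / 2) : 1 ≤ carry a (k + 1 + k) := by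
  have h1 : carry a (k + 1) = a (k + 1) + a k / 2 := by
    rw [carry_shift a k h0 1]; rfl
  have mono : ∀ s ≤ k, 2 ^ (k - s) ≤ carry a (k + 1 + s) := by
    intro s
    induction s with
    | zero => intro _; simpa [h1] using h
    | succ s ih =>
      intro hs
      have := ih (by omega)
      rw [show k - s = (k - (s + 1)) + 1 by omega, pow_succ] at this
      have h2 : carry a (k + 1 + (s + 1)) = a (k + 1 + s + 1) + carry a (k + 1 + s) / 2 := rfl
      omega
  simpa using mono k le_rfl

lemma numeric (m : ℕ) (a : ℕ → ℕ)
    (hT : g m + 1 ≤ ∑ s ∈ Finset.range (m + 1), a s) :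
    1 ≤ carry a m ∨ 1 ≤ carry (fun t => a (m - t)) m := by
  by_contra hcon
  have hc1 : carry a m = 0 := by omega
  have hc2 : carry (fun t => a (m - t)) m = 0 := by omega
  have w1 := carry_weight a m
  have w2 := carry_weight (fun t => a (m - t)) m
  have w3 : ∑ s ∈ Finset.range (m + 1), a (m - s) * 2 ^ s
      = ∑ s ∈ Finset.range (m + 1), a s * 2 ^ (m - s) := by
    rw [← sum_reflect m (fun s => a s * 2 ^ (m - s))]
    refine Finset.sum_congr rfl fun j hj => ?_
    rw [show m - (m - j) = j by simp at hj; omega]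
  simp only [w3] at w2
  rw [hc1] at w1
  rw [hc2] at w2
  have w : ∑ s ∈ Finset.range (m + 1), a s * (2 ^ s + 2 ^ (m - s)) + 2 ≤ 2 * 2 ^ m := by
    simp only [mul_add, Finset.sum_add_distrib]
    omega
  clear w1 w2 w3
  rcases Nat.even_or_odd m with ⟨k, rfl⟩ | ⟨k, hk⟩
  · unfold g at hT
    rw [if_pos (by omega), show (k + k) / 2 = k by omega] at hT
    have : (∑ s ∈ Finset.range (k + k + 1), a s) * (2 * 2 ^ k) ≤
        ∑ s ∈ Finset.range (k + k + 1), a s * (2 ^ s + 2 ^ (k + k - s)) := by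
      rw [Finset.sum_mul]
      refine Finset.sum_le_sum fun s hs => Nat.mul_le_mul_left _ (coef_even k s ?_)
      simp at hs; omega
    have hp := Nat.two_pow_pos k
    have hT' : 2 ^ k ≤ ∑ s ∈ Finset.range (k + k + 1), a s := by omega
    have := Nat.mul_le_mul_right (2 * 2 ^ k) hT'
    rw [pow_add 2 k k] at w
    nlinarith
  · obtain rfl : m = k + 1 + k := by omega
    unfold g at hT
    rw [if_neg (by omega), show (k + 1 + k) / 2 = k by omega] at hT
    set T := ∑ s ∈ Finset.range (k + 1 + k + 1), a s with hTd
    have hp := Nat.two_pow_pos k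
    have hX : 2 ^ (k + 1) = 2 * 2 ^ k := by rw [pow_succ]; ring
    have hm : 2 ^ (k + 1 + k) = 2 * 2 ^ k * 2 ^ k := by rw [pow_add 2 (k + 1) k, hX]
    rw [hm] at w
    have b1 : T * (3 * 2 ^ k) ≤
        ∑ s ∈ Finset.range (k + 1 + k + 1), a s * (2 ^ s + 2 ^ (k + 1 + k - s)) := by
      rw [hTd, Finset.sum_mul]
      refine Finset.sum_le_sum fun s hs => Nat.mul_le_mul_left _ (coef_odd k s ?_).1
      simp at hs; omega
    have b2 : 3 * T < 4 * 2 ^ k := by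
      by_contra hh
      push Not at hh
      have := Nat.mul_le_mul_right (2 ^ k) hh
      nlinarith
    have h3 := not_three (k + 1)
    rw [hX] at h3 hT
    obtain ⟨q, hq⟩ : ∃ q, q = 2 * 2 ^ k / 3 := ⟨_, rfl⟩
    rw [← hq] at hT
    have e1 : 2 * 2 ^ k = 3 * q + 2 := by omega
    have e2 : T = 2 * q + 1 := by omega
    have hz : ∀ s ∈ Finset.range (k + 1 + k + 1), s ≠ k → s ≠ k + 1 → a s = 0 := by
      intro s0 hs0 hk0 hk1
      by_contra ha
      have : ∑ s ∈ Finset.range (k + 1 + k + 1),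
          (a s * (6 * 2 ^ k) + if s = s0 then 3 * 2 ^ k else 0) ≤
          ∑ s ∈ Finset.range (k + 1 + k + 1), 2 * (a s * (2 ^ s + 2 ^ (k + 1 + k - s))) := by
        refine Finset.sum_le_sum fun s hs => ?_
        have hc := coef_odd k s (by simp at hs; omega)
        split_ifs with h
        · subst h
          have h9 := Nat.mul_le_mul_left (a s) (hc.2 hk0 hk1)
          have : 1 ≤ a s := by omega
          have := Nat.mul_le_mul_right (2 ^ k) this
          nlinarith
        · have h9 := Nat.mul_le_mul_left (a s) hc.1
          nlinarith
      rw [Finset.sum_add_distrib, ← Finset.sum_mul, ← hTd, Finset.sum_ite_eq', if_pos hs0,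
        ← Finset.mul_sum, e2] at this
      nlinarith
    have hsum : T = a k + a (k + 1) := by
      rw [hTd, Finset.sum_subset (s₁ := {k, k + 1}) (s₂ := Finset.range (k + 1 + k + 1)) ?_ ?_
        |>.symm, Finset.sum_pair (by omega)]
      · intro x hx; simp at hx ⊢; omega
      · intro x hx hx'
        simp only [Finset.mem_insert, Finset.mem_singleton, not_or] at hx'
        exact hz x hx hx'.1 hx'.2
    rcases Nat.lt_or_ge q (a (k + 1)) with h | h
    · have := mid_carry k a (fun s hs => hz s (by simp; omega) (by omega) (by omega)) (by omega)
      omega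
    · have := mid_carry k (fun t => a (k + 1 + k - t))
        (fun s hs => hz _ (Finset.mem_range.2 (by omega)) (by omega) (by omega)) (by
          simp only [show k + 1 + k - (k + 1) = k by omega, show k + 1 + k - k = k + 1 by omega]
          omega)
      omega

/-! ### Moves -/

section
variable {V : Type*} [DecidableEq V] {G : SimpleGraph V}

lemma moves (u v : V) (huv : G.Adj u v) (k : ℕ) (D : V → ℕ) (h : 2 * k ≤ D u) :
    ∃ D', Relation.ReflTransGen (PebMove G) D D' ∧ D v + k ≤ D' v ∧
      ∀ w, w ≠ u → w ≠ v → D' w = D w := by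
  induction k generalizing D with
  | zero => exact ⟨D, .refl, le_rfl, fun _ _ _ => rfl⟩
  | succ k ih =>
    obtain ⟨D', h1, h2, h3⟩ := ih
      (fun w => if w = u then D u - 2 else if w = v then D v + 1 else D w) (by simp; omega)
    refine ⟨D', .head ⟨u, v, huv, by omega, rfl⟩ h1, ?_, ?_⟩
    · simp [huv.ne'] at h2; omega
    · intro w hw1 hw2
      rw [h3 w hw1 hw2]; simp [hw1, hw2]

lemma realize (p : ℕ → V) (L : ℕ) (D : V → ℕ)
    (hadj : ∀ t < L, G.Adj (p t) (p (t + 1)))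
    (hinj : ∀ s t, s < t → t ≤ L → p s ≠ p t) (t : ℕ) (ht : t ≤ L) :
    ∃ D', Relation.ReflTransGen (PebMove G) D D' ∧ carry (fun s => D (p s)) t ≤ D' (p t) ∧
      ∀ w, (∀ s ≤ t, w ≠ p s) → D' w = D w := by
  induction t with
  | zero => exact ⟨D, .refl, le_rfl, fun _ _ => rfl⟩
  | succ t ih =>
    obtain ⟨D', h1, h2, h3⟩ := ih (by omega)
    obtain ⟨D'', e1, e2, e3⟩ := moves (p t) (p (t + 1)) (hadj t (by omega)) (D' (p t) / 2) D'
      (by omega)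
    refine ⟨D'', h1.trans e1, ?_, ?_⟩
    · rw [h3 (p (t + 1)) (fun s hs => (hinj s (t + 1) (by omega) ht).symm)] at e2
      simp only [carry]
      omega
    · intro w hw
      rw [e3 w (hw t (by omega)) (hw _ le_rfl), h3 w (fun s hs => hw s (by omega))]

lemma realize' (p : ℕ → V) (L : ℕ) (D : V → ℕ)
    (hadj : ∀ t < L, G.Adj (p t) (p (t + 1)))
    (hinj : ∀ s t, s < t → t ≤ L → p s ≠ p t) (N : ℕ)
    (hN : N ≤ carry (fun s => D (p s)) L) : Reaches G D (unitDist N (p L)) := by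
  obtain ⟨D', h1, h2, -⟩ := realize p L D hadj hinj L le_rfl
  refine ⟨D', h1, fun v => ?_⟩
  unfold unitDist
  split_ifs with h
  · subst h; omega
  · omega

lemma move_weight [Fintype V] (w : V → ℕ) (D D' : V → ℕ) (u v : V) (huv : G.Adj u v)
    (h2 : 2 ≤ D u) (hw : w v ≤ 2 * w u)
    (hD' : D' = fun w => if w = u then D u - 2 else if w = v then D v + 1 else D w) :
    ∑ x, D' x * w x ≤ ∑ x, D x * w x := by
  have key : ∑ x, (D' x * w x + if x = u then 2 * w u else 0)
      = ∑ x, (D x * w x + if x = v then w v else 0) := by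
    refine Finset.sum_congr rfl fun x _ => ?_
    subst hD'
    by_cases hu : x = u
    · subst hu
      obtain ⟨c, hc⟩ := Nat.exists_eq_add_of_le h2
      simp [huv.ne, hc]; ring
    · by_cases hv : x = v
      · subst hv; simp [hu]; ring
      · simp [hu, hv]
  rw [Finset.sum_add_distrib, Finset.sum_add_distrib, Finset.sum_ite_eq', Finset.sum_ite_eq',
    if_pos (Finset.mem_univ _), if_pos (Finset.mem_univ _)] at key
  omega

end

/-! ### The path -/

lemma sum_ext (n i m : ℕ) (hm : m + 1 = i + n + i) (h : ℕ → ℕ) (h1 : ∀ j < i, h j = 0)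
    (h2 : ∀ j, i + n ≤ j → j ≤ m → h j = 0) :
    ∑ j ∈ Finset.range (m + 1), h j = ∑ x : Fin n, h (i + x) := by
  rw [hm, Finset.sum_range_add, Finset.sum_range_add,
    Finset.sum_eq_zero (s := Finset.range i) (f := h) (fun j hj => h1 j (Finset.mem_range.1 hj)),
    Finset.sum_eq_zero (s := Finset.range i) (f := fun x => h (i + n + x))
      (fun j hj => h2 _ (by omega) (by have := Finset.mem_range.1 hj; omega)),
    zero_add, add_zero, Finset.sum_range]

open SimpleGraph in
lemma path_upper (n i m : ℕ) (hn : 2 ≤ n) (hm : m + 1 = i + n + i) (D : Fin n → ℕ)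
    (hD : g m + 1 ≤ pebTotal D) :
    Reaches (pathGraph n) D (unitDist (2 ^ i) ⟨0, by omega⟩) ∨
    Reaches (pathGraph n) D (unitDist (2 ^ i) ⟨n - 1, by omega⟩) := by
  have side : ∀ (a : ℕ → ℕ) (p : ℕ → Fin n), (∀ s < i, a s = 0) →
      (∀ s, i + n ≤ s → s ≤ m → a s = 0) → (∀ t < n, a (i + t) = D (p t)) →
      (∀ t < n - 1, (pathGraph n).Adj (p t) (p (t + 1))) →
      (∀ s t, s < t → t ≤ n - 1 → p s ≠ p t) → 1 ≤ carry a m →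
      Reaches (pathGraph n) D (unitDist (2 ^ i) (p (n - 1))) := by
    intro a p h1 h2 h3 h4 h5 h6
    apply realize' p (n - 1) D h4 h5
    rw [show m = (i + (n - 1)) + i by omega,
      carry_tail a _ _ (fun r hr1 hr2 => h2 r (by omega) (by omega)), carry_shift a i h1] at h6
    have h7 : ∀ t ≤ n - 1, carry (fun s => a (i + s)) t = carry (fun s => D (p s)) t := by
      intro t ht
      induction t with
      | zero => exact h3 0 (by omega)
      | succ t ih => simp only [carry]; rw [ih (by omega), h3 _ (by omega)]
    rw [h7 _ le_rfl] at h6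
    exact (Nat.one_le_div_iff (by positivity)).1 h6
  let a : ℕ → ℕ := fun j => if h : i ≤ j ∧ j < i + n then D ⟨j - i, by omega⟩ else 0
  have ha : ∀ x : Fin n, a (i + x) = D x := by
    intro x
    have : i ≤ i + x.val ∧ i + x.val < i + n := ⟨by omega, by omega⟩
    simp [a]
  have ha1 : ∀ j < i, a j = 0 := fun j hj => dif_neg (by omega)
  have ha2 : ∀ j, i + n ≤ j → a j = 0 := fun j hj => dif_neg (by omega)
  have hs : ∑ j ∈ Finset.range (m + 1), a j = pebTotal D := by
    rw [sum_ext n i m hm a ha1 (fun j hj _ => ha2 j hj)]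
    exact Finset.sum_congr rfl fun x _ => ha x
  rcases numeric m a (by omega) with h | h
  · right
    have := side a (fun t => ⟨min t (n - 1), by omega⟩) ha1 (fun j hj _ => ha2 j hj)
      (fun t ht => by
        rw [← ha]; congr 2; simp only; omega)
      (fun t ht => by rw [pathGraph_adj]; left; simp only; omega)
      (fun s t h1 h2 h3 => by simp only [Fin.mk.injEq] at h3; omega) h
    simpa using this
  · left
    have := side (fun t => a (m - t)) (fun t => ⟨n - 1 - t, by omega⟩)
      (fun j hj => ha2 _ (by omega)) (fun j hj _ => ha1 _ (by omega))
      (fun t ht => by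
        rw [← ha]; congr 1; simp only; omega)
      (fun t ht => by rw [pathGraph_adj]; right; simp only; omega)
      (fun s t h1 h2 h3 => by simp only [Fin.mk.injEq] at h3; omega) h
    simpa using this

lemma reach_weight {V : Type*} [DecidableEq V] [Fintype V] {G : SimpleGraph V} (w : V → ℕ)
    (hw : ∀ u v, G.Adj u v → w v ≤ 2 * w u) (D : V → ℕ) (N : ℕ) (x : V)
    (h : Reaches G D (unitDist N x)) : N * w x ≤ ∑ v, D v * w v := by
  obtain ⟨D', h1, h2⟩ := h
  have h3 : ∑ v, D' v * w v ≤ ∑ v, D v * w v := by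
    clear h2
    induction h1 with
    | refl => exact le_rfl
    | tail _ hmove ih =>
      obtain ⟨u, v, huv, hu, hE⟩ := hmove
      exact (move_weight w _ _ u v huv hu (hw u v huv) hE).trans ih
  refine le_trans ?_ h3
  have := h2 x
  simp only [unitDist, if_true] at this
  calc N * w x ≤ D' x * w x := Nat.mul_le_mul_right _ this
    _ ≤ _ := Finset.single_le_sum (f := fun v => D' v * w v) (fun _ _ => Nat.zero_le _)
      (Finset.mem_univ x)

open SimpleGraph in
lemma path_lower (n i m : ℕ) (hn : 2 ≤ n) (hm : m + 1 = i + n + i) :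
    ∃ D : Fin n → ℕ, pebTotal D = g m ∧
    ¬ Reaches (pathGraph n) D (unitDist (2 ^ i) ⟨0, by omega⟩) ∧
    ¬ Reaches (pathGraph n) D (unitDist (2 ^ i) ⟨n - 1, by omega⟩) := by
  have z1 : ∀ j < i, bad m j = 0 := fun j hj => bad_zero m j (by omega) (by omega)
  have z2 : ∀ j, i + n ≤ j → j ≤ m → bad m j = 0 :=
    fun j hj _ => bad_zero m j (by omega) (by omega)
  refine ⟨fun x => bad m (i + x), ?_, ?_, ?_⟩
  · rw [← bad_sum m (by omega), sum_ext n i m hm _ z1 z2]; rfl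
  · intro h
    have := reach_weight (fun x : Fin n => 2 ^ (m - (i + x))) (fun u v huv => by
      rw [← pow_succ']
      apply Nat.pow_le_pow_right (by norm_num)
      rw [pathGraph_adj] at huv; omega) _ _ _ h
    have h2 := bad_wL m (by omega)
    rw [sum_ext n i m hm _ (fun j hj => by simp [z1 j hj])
      (fun j hj hj' => by simp [z2 j hj hj'])] at h2
    rw [← pow_add] at this
    simp only [show i + (m - (i + 0)) = m by omega] at this
    omega
  · intro h
    have := reach_weight (fun x : Fin n => 2 ^ (i + x.val)) (fun u v huv => by
      rw [← pow_succ']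
      apply Nat.pow_le_pow_right (by norm_num)
      rw [pathGraph_adj] at huv; omega) _ _ _ h
    have h2 := bad_wR m (by omega)
    rw [sum_ext n i m hm _ (fun j hj => by simp [z1 j hj])
      (fun j hj hj' => by simp [z2 j hj hj'])] at h2
    rw [← pow_add] at this
    simp only [show i + (i + (n - 1)) = m by omega] at this
    omega

/-! ### The cycle -/

open SimpleGraph Fin.CommRing Fin.NatCast in
lemma cycle_upper (r : ℕ) (D : Fin (r + 2) → ℕ) (hD : g (r + 2) + 1 ≤ pebTotal D)
    (v : Fin (r + 2)) : Reaches (cycleGraph (r + 2)) D (unitDist 1 v) := by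
  by_cases h0 : 1 ≤ D v
  · refine ⟨D, .refl, fun w => ?_⟩
    unfold unitDist
    split_ifs with h
    · rwa [h]
    · omega
  replace h0 : D v = 0 := by omega
  have hcast : ((r + 2 : ℕ) : Fin (r + 2)) = 0 := Fin.natCast_self _
  have hinj : ∀ s t : ℕ, s < t → t < r + 2 → (s : Fin (r + 2)) ≠ (t : Fin (r + 2)) := by
    intro s t h1 h2 h3
    have := congrArg Fin.val h3
    rw [Fin.val_natCast, Fin.val_natCast, Nat.mod_eq_of_lt (by omega), Nat.mod_eq_of_lt h2] at this
    omega
  let a : ℕ → ℕ := fun j => D (v + (j : Fin (r + 2)))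
  have ha : ∑ j ∈ Finset.range (r + 2 + 1), a j = pebTotal D := by
    rw [Finset.sum_range_succ]
    simp only [a, hcast, add_zero, h0]
    rw [Finset.sum_range]
    simp only [Fin.cast_val_eq_self]
    exact Equiv.sum_comp (Equiv.addLeft v) D
  rcases numeric (r + 2) a (by omega) with h | h
  · rw [show r + 2 = 1 + (r + 1) by omega, carry_shift a 1 (by
      intro s hs; obtain rfl : s = 0 := by omega
      simpa [a] using h0)] at h
    have := realize' (G := cycleGraph (r + 2)) (fun t => v + ((1 + t : ℕ) : Fin (r + 2))) (r + 1) D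
      (fun t ht => by
        rw [cycleGraph_adj]; right; push_cast; ring)
      (fun s t hs ht he => by
        have := add_left_cancel he
        push_cast at this
        exact hinj s t hs (by omega) (add_left_cancel this)) 1 h
    simp only [show 1 + (r + 1) = r + 2 by omega, hcast, add_zero] at this
    exact this
  · rw [show r + 2 = 1 + (r + 1) by omega, carry_shift _ 1 (by
      intro s hs; obtain rfl : s = 0 := by omega
      simp only [show 1 + (r + 1) - 0 = r + 2 by omega, a, hcast, add_zero, h0])] at h
    have := realize' (G := cycleGraph (r + 2))
      (fun t => v + ((1 + (r + 1) - (1 + t) : ℕ) : Fin (r + 2))) (r + 1) D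
      (fun t ht => by
        rw [cycleGraph_adj]; left
        rw [show 1 + (r + 1) - (1 + t) = (1 + (r + 1) - (1 + (t + 1))) + 1 by omega]
        push_cast; ring)
      (fun s t hs ht he => by
        have := add_left_cancel he
        exact hinj (1 + (r + 1) - (1 + t)) (1 + (r + 1) - (1 + s)) (by omega) (by omega)
          this.symm) 1 h
    simpa using this

open SimpleGraph Fin.CommRing in
lemma cycle_adj_val (r : ℕ) (u v : Fin (r + 2)) (h : (cycleGraph (r + 2)).Adj u v) :
    u.val = v.val + 1 ∨ v.val = u.val + 1 ∨ (u.val = 0 ∧ v.val = r + 1) ∨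
      (v.val = 0 ∧ u.val = r + 1) := by
  rw [cycleGraph_adj] at h
  rcases h with h | h
  · have h' : u = v + 1 := by rw [← h]; ring
    have := congrArg Fin.val h'
    rw [Fin.val_add_one] at this
    split_ifs at this with hl
    · have := congrArg Fin.val hl
      rw [Fin.val_last] at this
      omega
    · omega
  · have h' : v = u + 1 := by rw [← h]; ring
    have := congrArg Fin.val h'
    rw [Fin.val_add_one] at this
    split_ifs at this with hl
    · have := congrArg Fin.val hl
      rw [Fin.val_last] at this
      omega
    · omega

open SimpleGraph in
lemma cycle_lower (r : ℕ) (hr : 1 ≤ r) :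
    ∃ D : Fin (r + 2) → ℕ, pebTotal D = g (r + 2) ∧
    ¬ Reaches (cycleGraph (r + 2)) D (unitDist 1 0) := by
  have hb : bad (r + 2) (r + 2) = 0 := bad_zero _ _ (by omega) (by omega)
  have hsum : ∀ f : ℕ → ℕ, ∑ x : Fin (r + 2), bad (r + 2) x * f x =
      ∑ j ∈ Finset.range (r + 2 + 1), bad (r + 2) j * f j := by
    intro f
    rw [Finset.sum_range_succ, hb, zero_mul, add_zero, Finset.sum_range]
  refine ⟨fun x => bad (r + 2) x, ?_, ?_⟩
  · rw [← bad_sum _ (by omega), pebTotal]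
    simpa using hsum (fun _ => 1)
  · rintro ⟨D', h1, h2⟩
    have inv : D' 0 = 0 ∧ ∑ x, D' x * 2 ^ (r + 2 - x.val) < 2 ^ (r + 2) ∧
        ∑ x, D' x * 2 ^ x.val < 2 ^ (r + 2) := by
      clear h2
      induction h1 with
      | refl =>
        refine ⟨bad_zero _ _ (by rw [Fin.val_zero]; omega) (by rw [Fin.val_zero]; omega), ?_, ?_⟩
        · rw [hsum (fun j => 2 ^ (r + 2 - j))]; exact bad_wL _ (by omega)
        · rw [hsum (fun j => 2 ^ j)]; exact bad_wR _ (by omega)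
      | @tail D E _ hmove ih =>
        obtain ⟨i0, iL, iR⟩ := ih
        obtain ⟨u, v, huv, hu, hE⟩ := hmove
        have hu0 : u.val ≠ 0 := by
          intro h
          have : u = 0 := Fin.ext h
          rw [this] at hu; omega
        have hadj := cycle_adj_val r u v huv
        have sL := Finset.single_le_sum (f := fun x : Fin (r + 2) => D x * 2 ^ (r + 2 - x.val))
          (fun _ _ => Nat.zero_le _) (Finset.mem_univ u)
        have sR := Finset.single_le_sum (f := fun x : Fin (r + 2) => D x * 2 ^ x.val)
          (fun _ _ => Nat.zero_le _) (Finset.mem_univ u)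
        have huL : u.val ≠ 1 := by
          intro h
          rw [h, show r + 2 - 1 = r + 1 by omega] at sL
          have := Nat.mul_le_mul_right (2 ^ (r + 1)) hu
          rw [← pow_succ'] at this
          exact absurd (this.trans sL) (not_le.2 iL)
        have huR : u.val ≠ r + 1 := by
          intro h
          rw [h] at sR
          have := Nat.mul_le_mul_right (2 ^ (r + 1)) hu
          rw [← pow_succ'] at this
          exact absurd (this.trans sR) (not_le.2 iR)
        have hv0 : v.val ≠ 0 := by omega
        refine ⟨?_, lt_of_le_of_lt (move_weight (fun x => 2 ^ (r + 2 - x.val)) D E u v huv hu ?_ hE)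
          iL, lt_of_le_of_lt (move_weight (fun x => 2 ^ x.val) D E u v huv hu ?_ hE) iR⟩
        · have e1 : (0 : Fin (r + 2)) ≠ u := fun h => hu0 (by rw [← h]; rfl)
          have e2 : (0 : Fin (r + 2)) ≠ v := fun h => hv0 (by rw [← h]; rfl)
          simp [hE, e1, e2, i0]
        · rw [← pow_succ']
          exact Nat.pow_le_pow_right (by norm_num) (by omega)
        · rw [← pow_succ']
          exact Nat.pow_le_pow_right (by norm_num) (by omega)
    have := h2 0
    simp [unitDist, inv.1] at this

lemma sInf_eq_of (S : Set ℕ∞) (k : ℕ) (h1 : ((k + 1 : ℕ) : ℕ∞) ∈ S)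
    (h2 : ∀ N ∈ S, ¬ N ≤ (k : ℕ∞)) : sInf S = ((k + 1 : ℕ) : ℕ∞) := by
  apply le_antisymm (sInf_le h1)
  refine le_sInf fun N hN => ?_
  have := h2 N hN
  push Not at this
  rw [Nat.cast_add, Nat.cast_one]
  exact Order.add_one_le_of_lt this

open SimpleGraph in
lemma cycle_eq (m : ℕ) (hm : 3 ≤ m) :
    pebSet (cycleGraph m) {D | ∃ v : Fin m, D = unitDist 1 v} = ((g m + 1 : ℕ) : ℕ∞) := by
  obtain ⟨r, rfl⟩ : ∃ r, m = r + 2 := ⟨m - 2, by omega⟩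
  apply sInf_eq_of
  · rintro D hD _ ⟨v, rfl⟩
    exact cycle_upper r D (by exact_mod_cast hD) v
  · intro N hN hle
    obtain ⟨D, hD, hno⟩ := cycle_lower r (by omega)
    exact hno (hN D (by rw [hD]; exact hle) _ ⟨0, rfl⟩)

end PebAux

open SimpleGraph in
/-- `ρ(Pₙ, {2^i·δ_{x₁}, 2^i·δ_{xₙ}}) = π(C_{n+2i-1})`. -/
theorem ts_path_power_targets_eq_cycle (n i : ℕ) (hn : 2 ≤ n)
    (hni : 3 ≤ n + 2 * i - 1) :
    tsPeb (pathGraph n)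
        {unitDist (2 ^ i) (⟨0, by omega⟩ : Fin n),
         unitDist (2 ^ i) (⟨n - 1, by omega⟩ : Fin n)}
      = pebSet (cycleGraph (n + 2 * i - 1))
          {D | ∃ v : Fin (n + 2 * i - 1), D = unitDist 1 v} := by
  rw [PebAux.cycle_eq _ hni]
  apply PebAux.sInf_eq_of
  · intro D hD
    rcases PebAux.path_upper n i (n + 2 * i - 1) hn (by omega) D (by exact_mod_cast hD) with h | h
    · exact ⟨_, Or.inl rfl, h⟩
    · exact ⟨_, Or.inr rfl, h⟩
  · intro N hN hle
    obtain ⟨D, hD, h1, h2⟩ := PebAux.path_lower n i (n + 2 * i - 1) hn (by omega)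
    obtain ⟨T, hT, hR⟩ := hN D (by rw [hD]; exact hle)
    rcases hT with rfl | rfl
    · exact h1 hR
    · exact h2 hR
end
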